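/- Every Neumann subgroup of M̂ = PGL(2,ℤ) is a maximal anisotropy subgroup of M̂: it is an anisotropy subgroup, and every subgroup of M̂ properly containing it fails to be an anisotropy subgroup. -/

import Mathlib

open Matrix Pointwise

noncomputable section

abbrev GL2Z := Matrix.GeneralLinearGroup (Fin 2) ℤ

/-- The subgroup {±I} of GL(2,ℤ), which is its center. -/
def pmI : Subgroup GL2Z := Subgroup.zpowers (-1)

instance pmI_normal : pmI.Normal := by
  constructor
  rintro n hn g
  obtain ⟨k, hk⟩ := Subgroup.mem_zpowers_iff.mp hn
  have hc : Commute ((-1 : GL2Z) ^ k) g := (Commute.neg_one_left g).zpow_left k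
  have : g * n * g⁻¹ = n := by
    rw [← hk, ← hc.eq]; group
  rw [this]; exact hn

/-- The extended modular group PGL(2,ℤ) = GL(2,ℤ)/{±I}. -/
abbrev Mhat := GL2Z ⧸ pmI

def pr : GL2Z →* Mhat := QuotientGroup.mk' pmI

def tauGL : GL2Z := ⟨!![1,1;0,1], !![1,-1;0,1], by decide, by decide⟩
def nuGL : GL2Z := ⟨!![-1,0;0,1], !![-1,0;0,1], by decide, by decide⟩
def omegaGL : GL2Z := ⟨!![0,-1;1,0], !![0,1;-1,0], by decide, by decide⟩
def phiGL : GL2Z := ⟨!![0,-1;1,1], !![1,1;-1,0], by decide, by decide⟩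

/-- τ, the class of [[1,1],[0,1]]. -/
def tau : Mhat := pr tauGL
/-- ν, the class of [[-1,0],[0,1]]. -/
def nu : Mhat := pr nuGL
/-- ω, the class of [[0,-1],[1,0]]. -/
def omega : Mhat := pr omegaGL
/-- φ, the class of [[0,-1],[1,1]]. -/
def phi : Mhat := pr phiGL

/-- T̂ = ⟨τ, ν⟩, the stabilizer of ∞. -/
def That : Subgroup Mhat := Subgroup.closure {tau, nu}

/-- A Neumann subgroup of the extended modular group: a complement of T̂. -/
def IsNeumann (S : Subgroup Mhat) : Prop :=
  (S : Set Mhat) * (That : Set Mhat) = Set.univ ∧ S ⊓ That = ⊥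

/-- The modular group PSL(2,ℤ), as the subgroup of PGL(2,ℤ) of classes of
matrices of determinant one. -/
def Msub : Subgroup Mhat :=
  Subgroup.map pr (MonoidHom.ker (Matrix.GeneralLinearGroup.det))

/-- The projective line over ℚ. -/
abbrev P1 := Projectivization ℚ (Fin 2 → ℚ)

/-- The linear automorphism of ℚ² induced by an element of GL(2,ℤ). -/
def lmap (g : GL2Z) : (Fin 2 → ℚ) →ₗ[ℚ] (Fin 2 → ℚ) :=
  Matrix.mulVecLin ((Int.castRingHom ℚ).mapMatrix (g : Matrix (Fin 2) (Fin 2) ℤ))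

lemma lmap_mul (g h : GL2Z) : lmap (g * h) = (lmap g).comp (lmap h) := by
  unfold lmap
  rw [Units.val_mul, _root_.map_mul, Matrix.mulVecLin_mul]

lemma lmap_one : lmap 1 = LinearMap.id := by
  unfold lmap
  rw [Units.val_one, _root_.map_one, Matrix.mulVecLin_one]

lemma lmap_inj (g : GL2Z) : Function.Injective (lmap g) := by
  apply Function.LeftInverse.injective (g := lmap g⁻¹)
  intro v
  rw [← LinearMap.comp_apply, ← lmap_mul, inv_mul_cancel, lmap_one, LinearMap.id_apply]


lemma pmap_congr {f f' : (Fin 2 → ℚ) →ₗ[ℚ] (Fin 2 → ℚ)} (h : f = f')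
    (hf : Function.Injective f) :
    Projectivization.map f hf = Projectivization.map f' (h ▸ hf) := by
  subst h; rfl

/-- The action of GL(2,ℤ) on the projective line over ℚ. -/
def pAct (g : GL2Z) : P1 → P1 := Projectivization.map (lmap g) (lmap_inj g)

lemma pAct_mul (g h : GL2Z) : pAct (g * h) = pAct g ∘ pAct h := by
  unfold pAct
  rw [pmap_congr (lmap_mul g h), Projectivization.map_comp]

lemma pAct_one : pAct 1 = id := by
  unfold pAct
  rw [pmap_congr lmap_one, Projectivization.map_id]

/-- The homomorphism from GL(2,ℤ) to permutations of ℙ¹(ℚ). -/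
def permOfGL : GL2Z →* Equiv.Perm P1 where
  toFun g :=
    { toFun := pAct g
      invFun := pAct g⁻¹
      left_inv := fun x => by
        rw [← Function.comp_apply (f := pAct g⁻¹), ← pAct_mul, inv_mul_cancel, pAct_one, id_eq]
      right_inv := fun x => by
        rw [← Function.comp_apply (f := pAct g), ← pAct_mul, mul_inv_cancel, pAct_one, id_eq] }
  map_one' := by
    ext x
    simp [pAct_one]
  map_mul' g h := by
    ext x
    simp [pAct_mul]

lemma permOfGL_neg_one : permOfGL (-1) = 1 := by
  have hl : ∀ v : Fin 2 → ℚ, lmap (-1) v = -v := by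
    intro v
    rw [lmap, Matrix.mulVecLin_apply, Units.val_neg, Units.val_one, map_neg, _root_.map_one,
      Matrix.neg_mulVec, Matrix.one_mulVec]
  ext x
  induction' x using Projectivization.ind with v hv
  show pAct (-1) (Projectivization.mk ℚ v hv) = Projectivization.mk ℚ v hv
  rw [pAct, Projectivization.map_mk]
  rw [Projectivization.mk_eq_mk_iff]
  exact ⟨-1, by rw [hl]; simp⟩

lemma pmI_le_ker : pmI ≤ permOfGL.ker := by
  rintro x hx
  obtain ⟨k, hk⟩ := Subgroup.mem_zpowers_iff.mp hx
  rw [MonoidHom.mem_ker, ← hk, map_zpow, permOfGL_neg_one, _root_.one_zpow]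

/-- The action of PGL(2,ℤ) on the projective line over ℚ. -/
def permHom : Mhat →* Equiv.Perm P1 :=
  QuotientGroup.lift pmI permOfGL (fun x hx => pmI_le_ker hx)

instance : MulAction Mhat P1 := MulAction.compHom P1 permHom

/-- An isotropy subgroup of PGL(2,ℤ): the stabilizer of a point of ℙ¹(ℚ). -/
def IsIsotropy (P : Subgroup Mhat) : Prop := ∃ p : P1, P = MulAction.stabilizer Mhat p

/-- An anisotropy subgroup: one intersecting every isotropy subgroup trivially. -/
def IsAnisotropy (S : Subgroup Mhat) : Prop := ∀ P : Subgroup Mhat, IsIsotropy P → S ⊓ P = ⊥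


/-- The point at infinity. -/
def pinf : P1 := Projectivization.mk ℚ ![1, 0] (by
  intro h; have := congrFun h 0; simp at this)

lemma smul_mk_pr (g : GL2Z) (v : Fin 2 → ℚ) (hv : v ≠ 0) :
    (pr g) • (Projectivization.mk ℚ v hv : P1) =
      Projectivization.mk ℚ (lmap g v) (fun h => hv (lmap_inj g (by rw [h, map_zero]))) := by
  show pAct g (Projectivization.mk ℚ v hv) = _
  rw [pAct, Projectivization.map_mk]

lemma lmap_inf (g : GL2Z) : lmap g ![1, 0] = ![((g.1 0 0 : ℤ) : ℚ), ((g.1 1 0 : ℤ) : ℚ)] := by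
  rw [lmap, Matrix.mulVecLin_apply]
  ext i
  fin_cases i <;> simp [Matrix.mulVec, dotProduct, Fin.sum_univ_two]

lemma smul_inf_iff (g : GL2Z) : (pr g) • pinf = pinf ↔ g.1 1 0 = 0 := by
  rw [pinf, smul_mk_pr, Projectivization.mk_eq_mk_iff']
  simp only [lmap_inf]
  constructor
  · rintro ⟨a, ha⟩
    have := congrFun ha 1
    simp at this
    exact_mod_cast this.symm
  · intro h
    refine ⟨((g.1 0 0 : ℤ) : ℚ), ?_⟩
    ext i
    fin_cases i <;> simp [h]

lemma pr_neg (g : GL2Z) : pr (-g) = pr g := by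
  have h : pr (-1) = 1 :=
    (QuotientGroup.eq_one_iff (-1 : GL2Z)).2 (Subgroup.mem_zpowers (-1 : GL2Z))
  rw [← neg_one_mul, map_mul, h, one_mul]

lemma tauGL_zpow (n : ℤ) : (tauGL ^ n).1 = !![1, n; 0, 1] := by
  induction n using Int.induction_on with
  | zero => ext i j; fin_cases i <;> fin_cases j <;> simp
  | succ k ih =>
    rw [_root_.zpow_add_one, Units.val_mul, ih]
    simp [tauGL, add_comm]
  | pred k ih =>
    rw [_root_.zpow_sub_one, Units.val_mul, ih]
    have : (tauGL⁻¹).1 = !![1, -1; 0, 1] := rfl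
    rw [this]
    simp
    ring

lemma tau_mem : tau ∈ That := Subgroup.subset_closure (by simp)
lemma nu_mem : nu ∈ That := Subgroup.subset_closure (by simp)

lemma mem_That_aux (g : GL2Z) (h0 : g.1 1 0 = 0) (h1 : g.1 1 1 = 1)
    (h2 : g.1 0 0 = 1 ∨ g.1 0 0 = -1) : pr g ∈ That := by
  rcases h2 with h2 | h2
  · have : g = tauGL ^ (g.1 0 1) := by
      apply Units.ext
      rw [tauGL_zpow]
      ext i j; fin_cases i <;> fin_cases j <;> simp [h0, h1, h2]
    rw [this, map_zpow]
    exact That.zpow_mem tau_mem _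
  · have : g = tauGL ^ (g.1 0 1) * nuGL := by
      apply Units.ext
      rw [Units.val_mul, tauGL_zpow]
      ext i j; fin_cases i <;> fin_cases j <;> simp [h0, h1, h2, nuGL]
    rw [this, map_mul, map_zpow]
    exact That.mul_mem (That.zpow_mem tau_mem _) nu_mem

lemma mem_That (g : GL2Z) (h0 : g.1 1 0 = 0) : pr g ∈ That := by
  have hd : IsUnit (g.1.det) := (Matrix.isUnit_iff_isUnit_det _).1 g.isUnit
  rw [Matrix.det_fin_two, h0, mul_zero, sub_zero] at hd
  have ha := Int.isUnit_iff.1 (isUnit_of_mul_isUnit_left hd)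
  have hb := Int.isUnit_iff.1 (isUnit_of_mul_isUnit_right hd)
  rcases hb with hb | hb
  · exact mem_That_aux g h0 hb ha
  · rw [← pr_neg]
    apply mem_That_aux
    · simp [h0]
    · simp [hb]
    · rcases ha with ha | ha <;> simp [ha]

lemma pr_surj (x : Mhat) : ∃ g, pr g = x := QuotientGroup.mk'_surjective pmI x

lemma That_eq : That = MulAction.stabilizer Mhat pinf := by
  apply le_antisymm
  · rw [That, Subgroup.closure_le]
    rintro x (rfl | rfl)
    · exact (smul_inf_iff tauGL).2 (by simp [tauGL])
    · exact (smul_inf_iff nuGL).2 (by simp [nuGL])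
  · intro x hx
    obtain ⟨g, rfl⟩ := pr_surj x
    exact mem_That g ((smul_inf_iff g).1 hx)

lemma trans_inf (p : P1) : ∃ x : Mhat, x • pinf = p := by
  induction' p using Projectivization.ind with v hv
  by_cases hy : v 1 = 0
  · refine ⟨1, ?_⟩
    rw [one_smul, pinf, eq_comm, Projectivization.mk_eq_mk_iff']
    refine ⟨v 0, ?_⟩
    ext i
    fin_cases i <;> simp [hy]
  · have hc : IsCoprime (v 0 / v 1).num ((v 0 / v 1).den : ℤ) :=
      Rat.isCoprime_num_den _
    obtain ⟨A, hA0, hA1⟩ := hc.exists_SL2_col 0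
    refine ⟨pr (A : GL2Z), ?_⟩
    rw [pinf, smul_mk_pr, eq_comm, Projectivization.mk_eq_mk_iff']
    refine ⟨v 1 / (v 0 / v 1).den, ?_⟩
    rw [lmap_inf]
    have e0 : (A : GL2Z).1 0 0 = (v 0 / v 1).num := hA0
    have e1 : (A : GL2Z).1 1 0 = ((v 0 / v 1).den : ℤ) := hA1
    rw [e0, e1]
    have hd : ((v 0 / v 1).den : ℚ) ≠ 0 := by exact_mod_cast (v 0 / v 1).den_ne_zero
    have hq := Rat.num_div_den (v 0 / v 1)
    ext i
    fin_cases i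
    · show v 1 / (v 0 / v 1).den * ((v 0 / v 1).num : ℚ) = v 0
      rw [div_mul_eq_mul_div, mul_div_assoc, hq]
      field_simp
    · show v 1 / (v 0 / v 1).den * (((v 0 / v 1).den : ℤ) : ℚ) = v 1
      push_cast
      exact div_mul_cancel₀ _ hd

/-- Every Neumann subgroup of M̂ = PGL(2,ℤ) is a maximal
anisotropy subgroup of M̂. -/
theorem neumann_maximal_anisotropy (Shat : Subgroup Mhat) (hN : IsNeumann Shat) :
    IsAnisotropy Shat ∧ ∀ U : Subgroup Mhat, Shat < U → ¬ IsAnisotropy U := by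
  obtain ⟨h1, h2⟩ := hN
  have dec : ∀ x : Mhat, ∃ s ∈ Shat, ∃ t ∈ That, s * t = x := by
    intro x
    have : x ∈ (Shat : Set Mhat) * (That : Set Mhat) := by rw [h1]; trivial
    exact Set.mem_mul.1 this
  constructor
  · rintro P ⟨p, rfl⟩
    obtain ⟨x, rfl⟩ := trans_inf p
    obtain ⟨s, hs, t, ht, rfl⟩ := dec x
    rw [That_eq] at ht
    have ht' : t • pinf = pinf := ht
    rw [mul_smul, ht', Subgroup.eq_bot_iff_forall]
    rintro y ⟨hyS, hyP⟩
    have hy : y • s • pinf = s • pinf := hyP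
    have hm : s⁻¹ * y * s ∈ Shat ⊓ That := by
      refine ⟨Shat.mul_mem (Shat.mul_mem (Shat.inv_mem hs) hyS) hs, ?_⟩
      rw [That_eq]
      show (s⁻¹ * y * s) • pinf = pinf
      rw [mul_smul, mul_smul, hy, inv_smul_smul]
    rw [h2, Subgroup.mem_bot] at hm
    have : y = s * (s⁻¹ * y * s) * s⁻¹ := by group
    rw [this, hm]; group
  · intro U hU hA
    obtain ⟨hle, u, huU, huS⟩ := SetLike.lt_iff_le_and_exists.1 hU
    obtain ⟨s, hs, t, ht, rfl⟩ := dec u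
    have htU : t ∈ U := (U.mul_mem_cancel_left (hle hs)).1 huU
    have hm : t ∈ U ⊓ That := ⟨htU, ht⟩
    rw [hA That ⟨pinf, That_eq⟩, Subgroup.mem_bot] at hm
    apply huS
    rw [hm, mul_one]; exact hs
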